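/- (Entropy of the correlation-rounded distribution.) Let n ≥ 1, let k ≥ 2, let (μ_S) be an SA(k)-consistent family on Fin n, and let S ⊆ Fin n with |S| ≤ k−1. Define μ̃ on {-1,1}^n by μ̃(x) = μ_S(x_S) · Π_{i ∉ S} [ μ_{S∪{i}}(x_S, x_i) / μ_S(x_S) ], with the convention that μ̃(x) = 0 when μ_S(x_S) = 0. Then μ̃ is a probability distribution on {-1,1}^n, its marginal on S is μ_S, and H(μ̃) = H(μ_S) + Σ_{i ∉ S} H(μ_i | μ_S). -/

import Mathlib

open scoped BigOperators

noncomputable section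

/-- The set `{-1, 1}` of spin values. -/
abbrev B : Finset ℝ := {-1, 1}

/-- The discrete cube `{-1,1}^n`. -/
abbrev Cube (n : ℕ) := Fin n → ↥B

/-- Assignments of spin values to the coordinates in `S`. -/
abbrev Asg {n : ℕ} (S : Finset (Fin n)) := ↥S → ↥B

/-- Shannon entropy (in nats), with the convention `0 * log 0 = 0`. -/
def ent {D : Type*} [Fintype D] (p : D → ℝ) : ℝ := -∑ d, p d * Real.log (p d)

/-- Restriction of an assignment on `S` to a subset `R ⊆ S`. -/
def res {n : ℕ} {R S : Finset (Fin n)} (h : R ⊆ S) (y : Asg S) : Asg R :=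
  fun i => y ⟨i.1, h i.2⟩

/-- The marginal on `R ⊆ S` of a local distribution on assignments to `S`. -/
def margTo {n : ℕ} {S : Finset (Fin n)} (μ : Asg S → ℝ) {R : Finset (Fin n)}
    (h : R ⊆ S) (z : Asg R) : ℝ :=
  ∑ y : Asg S, if res h y = z then μ y else 0

/-- A level-`k` Sherali–Adams consistent family on `Fin n`: local distributions
`μ_S` over assignments to each `S ⊆ Fin n` with `|S| ≤ k`, nonnegative, summing
to `1`, and consistent on intersections whenever `|S ∪ T| ≤ k`. -/
structure SAFamily (n k : ℕ) where
  μ : (S : Finset (Fin n)) → Asg S → ℝ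
  nonneg : ∀ S : Finset (Fin n), S.card ≤ k → ∀ y : Asg S, 0 ≤ μ S y
  sum_one : ∀ S : Finset (Fin n), S.card ≤ k → ∑ y : Asg S, μ S y = 1
  consistent : ∀ S T : Finset (Fin n), (S ∪ T).card ≤ k → ∀ z : Asg (S ∩ T),
    margTo (μ S) Finset.inter_subset_left z = margTo (μ T) Finset.inter_subset_right z

/-- Extension of an assignment on `S` to `insert i S` with value `a` at `i`. -/
def extAsg {n : ℕ} {S : Finset (Fin n)} (i : Fin n) (y : Asg S) (a : ↥B) :
    Asg (insert i S) :=
  fun j => if h : j.1 = i then a else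
    y ⟨j.1, by
      rcases Finset.mem_insert.mp j.2 with h' | h'
      · exact absurd h' h
      · exact h'⟩

/-- The conditional entropy `H(μ_i | μ_S)` computed from the local distributions
`μ_{S∪{i}}` and `μ_S` of an SA family (terms with `μ_S(x_S) = 0` contribute `0`). -/
def condEnt {n k : ℕ} (F : SAFamily n k) (S : Finset (Fin n)) (i : Fin n) : ℝ :=
  ∑ y : Asg S, F.μ S y *
    ent (fun a : ↥B => F.μ (insert i S) (extAsg i y a) / F.μ S y)

/-- The pairwise correlation `E_{μ_{{i,j}}}[x_i x_j]` of an SA family. -/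
def pairExp {n k : ℕ} (F : SAFamily n k) (i j : Fin n) : ℝ :=
  ∑ y : Asg ({i, j} : Finset (Fin n)),
    F.μ {i, j} y * (y ⟨i, by simp⟩ : ℝ) * (y ⟨j, by simp⟩ : ℝ)

/-- The augmented mean-field pseudo-entropy of an SA family at level `k'`:
`min_{|S| ≤ k'} [ H(μ_S) + Σ_{i ∉ S} H(μ_i | μ_S) ]`. -/
def pseudoEnt {n k : ℕ} (F : SAFamily n k) (k' : ℕ) : ℝ :=
  (Finset.univ.filter (fun S : Finset (Fin n) => S.card ≤ k')).inf'
    ⟨∅, Finset.mem_filter.mpr ⟨Finset.mem_univ _, by simp⟩⟩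
    (fun S => ent (F.μ S) + ∑ i ∈ Sᶜ, condEnt F S i)

/-- The total interaction strength `J_T = Σ_{i,j} |J i j|`. -/
def JT {n : ℕ} (J : Fin n → Fin n → ℝ) : ℝ := ∑ i : Fin n, ∑ j : Fin n, |J i j|

/-- `E[x_i | x_S]`, computed from `μ_{S∪{i}}` and `μ_S`
(equal to `0` when `μ_S(x_S) = 0`, since `·/0 = 0` in `ℝ`). -/
def condExp1 {n k : ℕ} (F : SAFamily n k) (S : Finset (Fin n)) (y : Asg S) (i : Fin n) : ℝ :=
  (∑ z : Asg (S ∪ {i}), if res Finset.subset_union_left z = y then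
      F.μ (S ∪ {i}) z * (z ⟨i, by simp⟩ : ℝ) else 0) / F.μ S y

/-- `E[x_i x_j | x_S]`, computed from `μ_{S∪{i,j}}` and `μ_S`. -/
def condExp2 {n k : ℕ} (F : SAFamily n k) (S : Finset (Fin n)) (y : Asg S) (i j : Fin n) : ℝ :=
  (∑ z : Asg (S ∪ {i, j}), if res Finset.subset_union_left z = y then
      F.μ (S ∪ {i, j}) z * (z ⟨i, by simp⟩ : ℝ) * (z ⟨j, by simp⟩ : ℝ) else 0) / F.μ S y

/-- `Σ_{x_S} μ_S(x_S) ( E[x_i x_j | x_S] − E[x_i | x_S] E[x_j | x_S] )`: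
the average conditional covariance of coordinates `i, j` given `S`. -/
def condCov {n k : ℕ} (F : SAFamily n k) (S : Finset (Fin n)) (i j : Fin n) : ℝ :=
  ∑ y : Asg S, F.μ S y * (condExp2 F S y i j - condExp1 F S y i * condExp1 F S y j)

/-- Restriction of `x ∈ {-1,1}^n` to the coordinates in `S`. -/
def restr {n : ℕ} (S : Finset (Fin n)) (x : Cube n) : Asg S := fun i => x i.1

/-- Marginal distribution of `μ : {-1,1}^n → ℝ` on the coordinates in `S`. -/
def margS {n : ℕ} (μ : Cube n → ℝ) (S : Finset (Fin n)) (y : Asg S) : ℝ :=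
  ∑ x : Cube n, if restr S x = y then μ x else 0

/-!
Given `x_S`, the coordinates outside `S` are drawn independently, so `μ̃` is a distribution on pairs
`(x_S, x_{Sᶜ})` whose first marginal is `μ_S` and whose conditionals are products. The chain rule
`H(Y, Z) = H(Y) + H(Z | Y)` and additivity of entropy on product distributions then give the
formula. The conditionals `μ_{S∪{i}} / μ_S` are normalised because consistency, applied to `S` and
`S ∪ {i}`, says that summing out `x_i` in `μ_{S∪{i}}` gives `μ_S`.
-/

section ProductSums

variable {ι R : Type*} {β : ι → Type*} [Fintype ι] [DecidableEq ι] [∀ i, Fintype (β i)]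
  [CommSemiring R]

theorem sum_pi_prod_eq_one {q : ∀ i, β i → R} (hq : ∀ i, ∑ b, q i b = 1) :
    ∑ z : ∀ i, β i, ∏ i, q i (z i) = 1 := by
  rw [← Fintype.prod_sum, Finset.prod_congr rfl fun i _ => hq i, Finset.prod_const_one]

theorem sum_pi_prod_mul_eval {q : ∀ i, β i → R} (i : ι) (hq : ∀ j ≠ i, ∑ b, q j b = 1)
    (f : β i → R) :
    ∑ z : ∀ j, β j, (∏ j, q j (z j)) * f (z i) = ∑ b, q i b * f b := by
  -- Absorb `f` into the `i`-th factor, so that the sum of products becomes a product of sums.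
  let g : ∀ j, β j → R := Function.update 1 i f
  have hg : ∀ j ≠ i, g j = 1 := fun j hj => by simp [g, hj]
  have hgi : g i = f := by simp [g]
  have hprod : ∀ z : ∀ j, β j, ∏ j, g j (z j) = f (z i) := fun z => by
    rw [Fintype.prod_eq_single i fun j hj => by rw [hg j hj, Pi.one_apply], hgi]
  calc ∑ z : ∀ j, β j, (∏ j, q j (z j)) * f (z i)
      = ∑ z : ∀ j, β j, ∏ j, q j (z j) * g j (z j) := by
        simp only [Finset.prod_mul_distrib, hprod]
    _ = ∏ j, ∑ b, q j b * g j b := (Fintype.prod_sum fun j b => q j b * g j b).symm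
    _ = ∑ b, q i b * f b := by
        rw [Fintype.prod_eq_single i fun j hj => by simp [hg j hj, hq j hj], hgi]

end ProductSums

theorem prod_mul_log_prod {ι : Type*} (s : Finset ι) (f : ι → ℝ) :
    (∏ i ∈ s, f i) * Real.log (∏ i ∈ s, f i) = ∑ i ∈ s, (∏ j ∈ s, f j) * Real.log (f i) := by
  rw [← Finset.mul_sum]
  by_cases h : ∏ i ∈ s, f i = 0
  · rw [h, zero_mul, zero_mul]
  · rw [Real.log_prod (Finset.prod_ne_zero_iff.mp h)]

section Entropy

theorem ent_eq_sum_negMulLog {D : Type*} [Fintype D] (p : D → ℝ) :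
    ent p = ∑ d, Real.negMulLog (p d) := by
  simp only [ent, Real.negMulLog_eq_neg, Finset.sum_neg_distrib]

theorem ent_comp_equiv {D E : Type*} [Fintype D] [Fintype E] (e : D ≃ E) (p : E → ℝ) :
    ent (p ∘ e) = ent p :=
  congrArg Neg.neg (e.sum_comp fun d => p d * Real.log (p d))

theorem ent_pi_prod {ι : Type*} {β : ι → Type*} [Fintype ι] [DecidableEq ι] [∀ i, Fintype (β i)]
    {q : ∀ i, β i → ℝ} (hq : ∀ i, ∑ b, q i b = 1) :
    ent (fun z : ∀ i, β i => ∏ i, q i (z i)) = ∑ i, ent (q i) := by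
  simp only [ent, prod_mul_log_prod]
  rw [Finset.sum_comm, ← Finset.sum_neg_distrib]
  exact Finset.sum_congr rfl fun i _ => congrArg Neg.neg <|
    sum_pi_prod_mul_eval i (fun j _ => hq j) fun b => Real.log (q i b)

theorem ent_chain_rule {A C : Type*} [Fintype A] [Fintype C] {p : A → ℝ} {r : A → C → ℝ}
    (hr : ∀ y, p y ≠ 0 → ∑ z, r y z = 1) :
    ent (fun w : A × C => p w.1 * r w.1 w.2) = ent p + ∑ y, p y * ent (r y) := by
  simp only [ent_eq_sum_negMulLog, Fintype.sum_prod_type, ← Finset.sum_add_distrib]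
  refine Finset.sum_congr rfl fun y _ => ?_
  by_cases hy : p y = 0
  · simp [hy]
  · simp only [Real.negMulLog_mul, Finset.sum_add_distrib, ← Finset.sum_mul, ← Finset.mul_sum,
      hr y hy, one_mul]

end Entropy

section CondIndepJoint

variable {A ι : Type*} {β : ι → Type*} [Fintype ι]

/-- The joint distribution of `(y, z)` when `y` is drawn from `p` and, given `y`, the coordinates
`z i` are drawn independently from the conditional distributions `q y i`. -/
def condIndepJoint (p : A → ℝ) (q : A → ∀ i, β i → ℝ) (w : A × ∀ i, β i) : ℝ :=
  p w.1 * ∏ i, q w.1 i (w.2 i)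

variable {p : A → ℝ} {q : A → ∀ i, β i → ℝ}

theorem condIndepJoint_nonneg (hp : ∀ y, 0 ≤ p y) (hq : ∀ y i b, 0 ≤ q y i b)
    (w : A × ∀ i, β i) : 0 ≤ condIndepJoint p q w :=
  mul_nonneg (hp _) (Finset.prod_nonneg fun _ _ => hq _ _ _)

variable [DecidableEq ι] [∀ i, Fintype (β i)]

theorem sum_condIndepJoint {y : A} (hq : p y ≠ 0 → ∀ i, ∑ b, q y i b = 1) :
    ∑ z, condIndepJoint p q (y, z) = p y := by
  simp only [condIndepJoint, ← Finset.mul_sum]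
  by_cases hy : p y = 0
  · rw [hy, zero_mul]
  · rw [sum_pi_prod_eq_one (hq hy), mul_one]

theorem ent_condIndepJoint [Fintype A] (hq : ∀ y, p y ≠ 0 → ∀ i, ∑ b, q y i b = 1) :
    ent (condIndepJoint p q) = ent p + ∑ i, ∑ y, p y * ent (q y i) := by
  have hcond : ∀ y, p y * ent (fun z : ∀ i, β i => ∏ i, q y i (z i)) =
      ∑ i, p y * ent (q y i) := by
    intro y
    by_cases hy : p y = 0
    · simp [hy]
    · rw [ent_pi_prod (hq y hy), Finset.mul_sum]
  calc ent (condIndepJoint p q)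
      = ent p + ∑ y, p y * ent (fun z : ∀ i, β i => ∏ i, q y i (z i)) :=
        ent_chain_rule fun y hy => sum_pi_prod_eq_one (hq y hy)
    _ = ent p + ∑ i, ∑ y, p y * ent (q y i) := by
        rw [Finset.sum_congr rfl fun y _ => hcond y, Finset.sum_comm]

end CondIndepJoint

section Marginals

variable {n : ℕ} {S : Finset (Fin n)}

theorem margTo_self (μ : Asg S → ℝ) : margTo μ subset_rfl = μ := by
  funext z
  have hres (y : Asg S) : res subset_rfl y = y := rfl
  simp [margTo, hres]

theorem res_extAsg {i : Fin n} (hi : i ∉ S) (y : Asg S) (a : ↥B) :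
    res (Finset.subset_insert i S) (extAsg i y a) = y := by
  funext j
  exact dif_neg fun hj : j.1 = i => hi (hj ▸ j.2)

theorem extAsg_apply_self (i : Fin n) (y : Asg S) (a : ↥B) :
    extAsg i y a ⟨i, Finset.mem_insert_self i S⟩ = a :=
  dif_pos rfl

theorem extAsg_res (i : Fin n) (w : Asg (insert i S)) :
    extAsg i (res (Finset.subset_insert i S) w) (w ⟨i, Finset.mem_insert_self i S⟩) = w := by
  funext ⟨j, hj⟩
  by_cases h : j = i
  · subst h
    exact dif_pos rfl
  · exact dif_neg h

theorem margTo_insert {i : Fin n} (hi : i ∉ S) (μ : Asg (insert i S) → ℝ) (y : Asg S) :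
    margTo μ (Finset.subset_insert i S) y = ∑ a : ↥B, μ (extAsg i y a) := by
  rw [margTo, ← Finset.sum_filter]
  have hext : ∀ w ∈ Finset.univ.filter fun w => res (Finset.subset_insert i S) w = y,
      extAsg i y (w ⟨i, Finset.mem_insert_self i S⟩) = w := fun w hw => by
    rw [← (Finset.mem_filter.mp hw).2, extAsg_res]
  exact Finset.sum_nbij' (fun w => w ⟨i, Finset.mem_insert_self i S⟩) (extAsg i y)
    (fun _ _ => Finset.mem_univ _)
    (fun a _ => Finset.mem_filter.mpr ⟨Finset.mem_univ _, res_extAsg hi y a⟩)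
    hext (fun a _ => extAsg_apply_self i y a) fun w hw => by rw [hext w hw]

theorem sum_margS (μ : Cube n → ℝ) (S : Finset (Fin n)) :
    ∑ y, margS μ S y = ∑ x, μ x := by
  simp only [margS]
  rw [Finset.sum_comm]
  simp

/-- The splitting of a point of the cube into its coordinates in `S` and those outside `S`. -/
def cubeSplit (S : Finset (Fin n)) : Cube n ≃ Asg S × ({i // i ∉ S} → ↥B) :=
  Equiv.piEquivPiSubtypeProd (· ∈ S) fun _ => ↥B

theorem margS_comp_cubeSplit (f : Asg S × ({i // i ∉ S} → ↥B) → ℝ) (y : Asg S) :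
    margS (f ∘ cubeSplit S) S y = ∑ z, f (y, z) :=
  calc margS (f ∘ cubeSplit S) S y
      = ∑ w, if w.1 = y then f w else 0 :=
        (cubeSplit S).sum_comp fun w => if w.1 = y then f w else 0
    _ = ∑ z, f (y, z) := by simp [Fintype.sum_prod_type_right]

end Marginals

namespace SAFamily

variable {n k : ℕ} (F : SAFamily n k) {S : Finset (Fin n)}

theorem margTo_eq {R T : Finset (Fin n)} (hRT : R ⊆ T) (hT : T.card ≤ k) :
    margTo (F.μ T) hRT = F.μ R := by
  -- `R ∩ T = R` holds only propositionally, so `R ∩ T` is generalised before substituting.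
  suffices ∀ Q (_ : Q = R) (h₁ : Q ⊆ R) (h₂ : Q ⊆ T),
      (∀ z, margTo (F.μ R) h₁ z = margTo (F.μ T) h₂ z) → margTo (F.μ T) hRT = F.μ R from
    this (R ∩ T) (Finset.inter_eq_left.mpr hRT) _ _
      (F.consistent R T ((Finset.union_eq_right.mpr hRT).symm ▸ hT))
  rintro _ rfl h₁ h₂ hz
  rw [← funext hz, margTo_self]

/-- The conditional distribution `μ_{S∪{i}}(x_S, ·) / μ_S(x_S)` of coordinate `i` given `x_S = y`;
it is identically `0` when `μ_S(y) = 0`. -/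
def cond (S : Finset (Fin n)) (y : Asg S) (i : Fin n) (a : ↥B) : ℝ :=
  F.μ (insert i S) (extAsg i y a) / F.μ S y

theorem cond_nonneg (hS : S.card + 1 ≤ k) (y : Asg S) (i : Fin n) (a : ↥B) :
    0 ≤ F.cond S y i a :=
  div_nonneg (F.nonneg _ ((Finset.card_insert_le i S).trans hS) _) (F.nonneg S (by lia) y)

theorem sum_cond (hS : S.card + 1 ≤ k) {y : Asg S} (hy : F.μ S y ≠ 0) {i : Fin n} (hi : i ∉ S) :
    ∑ a, F.cond S y i a = 1 := by
  simp only [cond]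
  rw [← Finset.sum_div, ← margTo_insert hi,
    F.margTo_eq (Finset.subset_insert i S) ((Finset.card_insert_le i S).trans hS), div_self hy]

/-- The correlation-rounded distribution `μ̃` on `{-1,1}^n`, obtained by sampling `x_S` from `μ_S`
and then every `x_i` with `i ∉ S` independently from its conditional distribution given `x_S`. -/
def rounding (S : Finset (Fin n)) : Cube n → ℝ :=
  condIndepJoint (F.μ S) (fun y (i : {i // i ∉ S}) => F.cond S y i) ∘ cubeSplit S

theorem rounding_apply (S : Finset (Fin n)) (x : Cube n) :
    F.rounding S x = F.μ S (restr S x) * ∏ i ∈ Sᶜ, F.cond S (restr S x) i (x i) :=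
  congrArg (F.μ S (restr S x) * ·) <|
    (Finset.prod_subtype Sᶜ (fun _ => Finset.mem_compl)
      fun i => F.cond S (restr S x) i (x i)).symm

theorem rounding_nonneg (hS : S.card + 1 ≤ k) (x : Cube n) : 0 ≤ F.rounding S x :=
  condIndepJoint_nonneg (F.nonneg S (by lia)) (fun y (i : {i // i ∉ S}) => F.cond_nonneg hS y i) _

theorem margS_rounding (hS : S.card + 1 ≤ k) (y : Asg S) :
    margS (F.rounding S) S y = F.μ S y := by
  rw [rounding, margS_comp_cubeSplit]
  exact sum_condIndepJoint fun hy i => F.sum_cond hS hy i.2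

theorem sum_rounding (hS : S.card + 1 ≤ k) : ∑ x, F.rounding S x = 1 := by
  rw [← sum_margS _ S, Finset.sum_congr rfl fun y _ => F.margS_rounding hS y,
    F.sum_one S (by lia)]

theorem ent_rounding (hS : S.card + 1 ≤ k) :
    ent (F.rounding S) = ent (F.μ S) + ∑ i ∈ Sᶜ, condEnt F S i := by
  rw [rounding, ent_comp_equiv, ent_condIndepJoint fun y hy i => F.sum_cond hS hy i.2,
    Finset.sum_subtype Sᶜ (fun _ => Finset.mem_compl)]
  rfl

end SAFamily

/-- Entropy of the correlation-rounded distribution: rounding an SA family by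
sampling `S` from `μ_S` and all other coordinates conditionally independently
yields a genuine probability distribution `μ̃` on `{-1,1}^n` whose marginal on
`S` is `μ_S` and whose entropy is exactly `H(μ_S) + Σ_{i ∉ S} H(μ_i | μ_S)`. -/
theorem correlation_rounding_entropy (n k : ℕ) (hn : 1 ≤ n) (hk : 2 ≤ k)
    (F : SAFamily n k) (S : Finset (Fin n)) (hS : S.card ≤ k - 1)
    (tμ : Cube n → ℝ)
    (htμ : ∀ x : Cube n, tμ x =
      if F.μ S (restr S x) = 0 then 0 else
        F.μ S (restr S x) *
          ∏ i ∈ Sᶜ, (F.μ (insert i S) (extAsg i (restr S x) (x i)) / F.μ S (restr S x))) :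
    (∀ x, 0 ≤ tμ x) ∧ (∑ x : Cube n, tμ x = 1) ∧
      (∀ y : Asg S, margS tμ S y = F.μ S y) ∧
      ent tμ = ent (F.μ S) + ∑ i ∈ Sᶜ, condEnt F S i := by
  have hS' : S.card + 1 ≤ k := by lia
  obtain rfl : tμ = F.rounding S := by
    funext x
    rw [htμ, F.rounding_apply]
    split_ifs with h
    · rw [h, zero_mul]
    · rfl
  exact ⟨F.rounding_nonneg hS', F.sum_rounding hS', F.margS_rounding hS', F.ent_rounding hS'⟩
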